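/- Fix μ ∈ (0, 2], an integer q ≥ 1 and J > 0, define Φ_μ(ν) = (πν / cos(πν/2))² · (πν / sin(πν))^{μ/2 − 1} for ν ∈ (0,1), and for each β > 0 let ν(β) denote the unique ν ∈ (0,1) satisfying μ q (β² J² / 2^q)^{μ/2} = Φ_μ(ν). Then the function β ↦ ν(β) is strictly increasing on (0, ∞). -/

import Mathlib

open Real

/-!
The half-angle identity `(x / cos (x / 2))² = 2 x tan (x / 2) · (x / sin x)` absorbs the possibly
negative exponent `μ / 2 - 1`:
`Φ_μ(ν) = 2 x tan (x / 2) · (x / sin x) ^ (μ / 2)` with `x = πν`.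
On `(0, π)` both `x tan (x / 2)` and `x / sin x` are positive and increasing, the latter by
concavity of `sin`, so `Φ_μ` is strictly increasing on `(0, 1)`. The other side of the closure
condition is strictly increasing in `β`, and strict monotonicity of `Φ_μ` transfers this to `ν`.
-/

/-- The large-`q` closure function `Φ_μ(ν)` of the Lévy SYK model, meaningful for `ν ∈ (0, 1)`. -/
noncomputable def closureFunction (μ ν : ℝ) : ℝ :=
  (π * ν / cos (π * ν / 2)) ^ 2 * (π * ν / sin (π * ν)) ^ (μ / 2 - 1)

lemma strictMonoOn_div_sin : StrictMonoOn (fun x : ℝ ↦ x / sin x) (Set.Ioo 0 π) := by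
  intro x hx y hy hxy
  have sin_y_pos : 0 < sin y := sin_pos_of_mem_Ioo hy
  have secant_lt : sin y / y < sin x / x := by
    simpa using strictConcaveOn_sin_Icc.secant_strict_mono
      (Set.left_mem_Icc.2 pi_pos.le) (Set.Ioo_subset_Icc_self hx) (Set.Ioo_subset_Icc_self hy)
      hx.1.ne' hy.1.ne' hxy
  simpa using inv_strictAnti₀ (div_pos sin_y_pos hy.1) secant_lt

lemma strictMonoOn_mul_tan_half : StrictMonoOn (fun x : ℝ ↦ x * tan (x / 2)) (Set.Ico 0 π) := by
  intro x hx y hy hxy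
  have tan_nonneg : 0 ≤ tan (x / 2) :=
    tan_nonneg_of_nonneg_of_le_pi_div_two (by linarith [hx.1]) (by linarith [hx.2])
  have tan_lt : tan (x / 2) < tan (y / 2) :=
    tan_lt_tan_of_nonneg_of_lt_pi_div_two (by linarith [hx.1]) (by linarith [hy.2]) (by linarith)
  exact mul_lt_mul'' hxy tan_lt hx.1 tan_nonneg

lemma sq_div_cos_half {x : ℝ} (hx : sin x ≠ 0) :
    (x / cos (x / 2)) ^ 2 = 2 * (x * tan (x / 2)) * (x / sin x) := by
  have sin_eq : sin x = 2 * sin (x / 2) * cos (x / 2) := by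
    rw [← sin_two_mul, mul_div_cancel₀ x two_ne_zero]
  have sin_half_ne : sin (x / 2) ≠ 0 := fun h ↦ hx (by simp [sin_eq, h])
  have cos_half_ne : cos (x / 2) ≠ 0 := fun h ↦ hx (by simp [sin_eq, h])
  rw [tan_eq_sin_div_cos, sin_eq]
  field_simp

lemma pi_mul_mem_Ioo {ν : ℝ} (hν : ν ∈ Set.Ioo (0 : ℝ) 1) : π * ν ∈ Set.Ioo 0 π :=
  ⟨mul_pos pi_pos hν.1, mul_lt_of_lt_one_right pi_pos hν.2⟩

lemma closureFunction_eq_mul_tan_half_mul_rpow (μ : ℝ) {ν : ℝ} (hν : ν ∈ Set.Ioo (0 : ℝ) 1) :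
    closureFunction μ ν =
      2 * (π * ν * tan (π * ν / 2)) * (π * ν / sin (π * ν)) ^ (μ / 2) := by
  have hx := pi_mul_mem_Ioo hν
  have sin_pos : 0 < sin (π * ν) := sin_pos_of_mem_Ioo hx
  have ratio_pos : 0 < π * ν / sin (π * ν) := div_pos hx.1 sin_pos
  rw [closureFunction, sq_div_cos_half sin_pos.ne', mul_assoc, rpow_sub_one ratio_pos.ne',
    mul_div_cancel₀ _ ratio_pos.ne']

lemma strictMonoOn_closureFunction {μ : ℝ} (hμ : 0 ≤ μ) :
    StrictMonoOn (closureFunction μ) (Set.Ioo 0 1) := by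
  intro a ha b hb hab
  have hx := pi_mul_mem_Ioo ha
  have hy := pi_mul_mem_Ioo hb
  have hxy : π * a < π * b := mul_lt_mul_of_pos_left hab pi_pos
  have mul_tan_lt : π * a * tan (π * a / 2) < π * b * tan (π * b / 2) :=
    strictMonoOn_mul_tan_half (Set.Ioo_subset_Ico_self hx) (Set.Ioo_subset_Ico_self hy) hxy
  have mul_tan_nonneg : 0 ≤ π * b * tan (π * b / 2) :=
    mul_nonneg hy.1.le
      (tan_nonneg_of_nonneg_of_le_pi_div_two (by linarith [hy.1]) (by linarith [hy.2]))
  have ratio_pos : 0 < π * a / sin (π * a) := div_pos hx.1 (sin_pos_of_mem_Ioo hx)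
  have ratio_rpow_le : (π * a / sin (π * a)) ^ (μ / 2) ≤ (π * b / sin (π * b)) ^ (μ / 2) :=
    rpow_le_rpow ratio_pos.le (strictMonoOn_div_sin hx hy hxy).le (by positivity)
  rw [closureFunction_eq_mul_tan_half_mul_rpow μ ha, closureFunction_eq_mul_tan_half_mul_rpow μ hb]
  exact mul_lt_mul (by linarith) ratio_rpow_le (rpow_pos_of_pos ratio_pos _) (by positivity)

lemma strictMonoOn_const_mul_sq_mul_div_rpow {a b c p : ℝ} (ha : 0 < a) (hb : 0 < b) (hc : 0 < c)
    (hp : 0 < p) : StrictMonoOn (fun β : ℝ ↦ a * (β ^ 2 * b / c) ^ p) (Set.Ici 0) := by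
  intro x hx y _ hxy
  have base_lt : x ^ 2 * b / c < y ^ 2 * b / c := by
    have : x ^ 2 < y ^ 2 := pow_lt_pow_left₀ hxy hx two_ne_zero
    gcongr
  exact mul_lt_mul_of_pos_left (rpow_lt_rpow (by positivity) base_lt hp) ha

theorem closure_solution_strictMono_in_beta_general {μ q J : ℝ} (hμ : 0 < μ) (hq : 0 < q)
    (hJ : J ≠ 0) {ν : ℝ → ℝ} (hmem : ∀ β > 0, ν β ∈ Set.Ioo (0 : ℝ) 1)
    (hclosure : ∀ β > 0,
      μ * q * (β ^ 2 * J ^ 2 / 2 ^ q) ^ (μ / 2) = closureFunction μ (ν β)) :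
    StrictMonoOn ν (Set.Ioi 0) := by
  intro x hx y hy hxy
  rw [← (strictMonoOn_closureFunction hμ.le).lt_iff_lt (hmem x hx) (hmem y hy),
    ← hclosure x hx, ← hclosure y hy]
  exact strictMonoOn_const_mul_sq_mul_div_rpow (mul_pos hμ hq) (by positivity) (by positivity)
    (half_pos hμ) (Set.Ioi_subset_Ici_self hx) (Set.Ioi_subset_Ici_self hy) hxy

/-- The solution `ν(β) ∈ (0,1)` of the large-`q` closure condition
`μ q (β² J² / 2^q)^{μ/2} = Φ_μ(ν(β))` is strictly increasing in `β` on `(0,∞)`. -/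
theorem closure_solution_strictMono_in_beta (μ : ℝ) (hμ : μ ∈ Set.Ioc (0 : ℝ) 2)
    (q : ℕ) (hq : 1 ≤ q) (J : ℝ) (hJ : 0 < J) (ν : ℝ → ℝ)
    (hmem : ∀ β > (0 : ℝ), ν β ∈ Set.Ioo (0 : ℝ) 1)
    (hclosure : ∀ β > (0 : ℝ),
      μ * (q : ℝ) * (β ^ 2 * J ^ 2 / 2 ^ q) ^ (μ / 2) =
        (π * ν β / Real.cos (π * ν β / 2)) ^ 2 *
          (π * ν β / Real.sin (π * ν β)) ^ (μ / 2 - 1)) :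
    StrictMonoOn ν (Set.Ioi (0 : ℝ)) :=
  closure_solution_strictMono_in_beta_general hμ.1 (Nat.cast_pos.2 hq) hJ.ne' hmem
    (by simpa only [rpow_natCast, closureFunction] using hclosure)
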